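/- The Weierstrass recurrence coefficients are uniquely determined by the curve equation: if d : ℕ → K is any sequence (indexed by l ≥ 2) such that the Laurent series X_d(z) = z^{-2} + Σ_{l≥2} d_l·z^{2l-2} and Y_d(z) = -z^{-3} + Σ_{l≥2} (l-1)·d_l·z^{2l-3} in K((z)) satisfy Y_d(z)^2 = X_d(z)^3 + a·X_d(z) + b, then d_l = c_l for all l ≥ 2, where c is the sequence given by the Weierstrass recurrence. -/

import Mathlib

/-- The Weierstrass recurrence: `c 2 = -a/5`, `c 3 = -b/7`, and for `l ≥ 4`,
`c l = (3 / ((2l+1)(l-3))) * ∑_{s=2}^{l-2} c s * c (l-s)`. -/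
def WeierstrassRec {K : Type*} [Field K] (a b : K) (c : ℕ → K) : Prop :=
  c 2 = -a / 5 ∧ c 3 = -b / 7 ∧
    ∀ l : ℕ, 4 ≤ l →
      c l = 3 / ((2 * (l : K) + 1) * ((l : K) - 3)) *
        ∑ s ∈ Finset.Icc 2 (l - 2), c s * c (l - s)

/-- `X` is the formal Laurent series `z⁻² + ∑_{l ≥ 2} c l · z^(2l-2)`
(the expansion of the Weierstrass ℘-function). -/
def IsWeierstrassX {K : Type*} [Field K] (c : ℕ → K) (X : LaurentSeries K) : Prop :=
  X.coeff (-2) = 1 ∧ (∀ l : ℕ, 2 ≤ l → X.coeff (2 * (l : ℤ) - 2) = c l) ∧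
    ∀ n : ℤ, n ≠ -2 → (∀ l : ℕ, 2 ≤ l → n ≠ 2 * (l : ℤ) - 2) → X.coeff n = 0

/-- `Y` is the formal Laurent series `-z⁻³ + ∑_{l ≥ 2} (l-1) · c l · z^(2l-3)`
(the expansion of `(1/2)℘′`). -/
def IsWeierstrassY {K : Type*} [Field K] (c : ℕ → K) (Y : LaurentSeries K) : Prop :=
  Y.coeff (-3) = -1 ∧ (∀ l : ℕ, 2 ≤ l → Y.coeff (2 * (l : ℤ) - 3) = ((l : K) - 1) * c l) ∧
    ∀ n : ℤ, n ≠ -3 → (∀ l : ℕ, 2 ≤ l → n ≠ 2 * (l : ℤ) - 3) → Y.coeff n = 0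

/-!
In the variable `w = z²`, the series `f = z²X_d` and `g = z³Y_d` are power series, and comparing
coefficients gives `g = θf - f` for the Euler operator `θ = w d/dw`. The curve equation becomes
`g² = f³ + a w² f + b w³`; applying `θ`, subtracting three times the equation itself and cancelling
the unit `g` leaves the second order equation `2θg - 3g = 3f² + a w²`, the analogue of
`℘″ = 6℘² - g₂/2`. Its coefficient of `wˡ` is the recurrence multiplied by `(2l + 1)(l - 3)`. This
factor vanishes only at `l = 3`, where differentiation has lost the constant `b`; there the
coefficient of `w³` in the cubic itself determines `d 3`.
-/

theorem WeierstrassRec.unique {K : Type*} [Field K] {a b : K} {c d : ℕ → K}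
    (hc : WeierstrassRec a b c) (hd : WeierstrassRec a b d) {l : ℕ} (hl : 2 ≤ l) : c l = d l := by
  induction l using Nat.strong_induction_on with
  | _ l ih =>
    obtain rfl | rfl | hl4 : l = 2 ∨ l = 3 ∨ 4 ≤ l := by omega
    · rw [hc.1, hd.1]
    · rw [hc.2.1, hd.2.1]
    · rw [hc.2.2 l hl4, hd.2.2 l hl4]
      congr 1
      refine Finset.sum_congr rfl fun s hs => ?_
      rw [Finset.mem_Icc] at hs
      rw [ih s (by omega) hs.1, ih (l - s) (by omega) (by omega)]

open PowerSeries

section Derivation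

variable {R A : Type*} [CommSemiring R] [CommRing A] [Algebra R A]

theorem two_mul_derivation_sub_three_mul_eq_of_sq_eq (D : Derivation R A A) {a b x f g : A}
    (ha : D a = 0) (hb : D b = 0) (hx : D x = x) (hg : g = D f - f) (hreg : IsLeftRegular g)
    (hcubic : g ^ 2 = f ^ 3 + a * x ^ 2 * f + b * x ^ 3) :
    2 * D g - 3 * g = 3 * f ^ 2 + a * x ^ 2 := by
  have hderiv : 2 * g * D g =
      3 * f ^ 2 * D f + a * (2 * x ^ 2 * f + x ^ 2 * D f) + 3 * b * x ^ 3 := by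
    have h := congrArg D hcubic
    simp only [map_add, Derivation.leibniz, Derivation.leibniz_pow, ha, hb, hx, smul_eq_mul,
      nsmul_eq_mul] at h
    linear_combination h
  refine hreg ?_
  linear_combination hderiv - 3 * hcubic - (3 * f ^ 2 + a * x ^ 2) * hg

end Derivation

section Coefficients

variable {R : Type*} [Semiring R]

theorem coeff_mul_of_coeff_one_eq_zero {f g : R⟦X⟧} (hf : coeff 1 f = 0)
    (hg : coeff 1 g = 0) {l : ℕ} (hl : 2 ≤ l) :
    coeff l (f * g) = coeff 0 f * coeff l g + coeff l f * coeff 0 g +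
      ∑ s ∈ Finset.Icc 2 (l - 2), coeff s f * coeff (l - s) g := by
  have hinner : ∑ s ∈ Finset.Icc 2 (l - 2), coeff s f * coeff (l - s) g =
      ∑ s ∈ Finset.Ico 1 l, coeff s f * coeff (l - s) g := by
    refine Finset.sum_subset (fun s => by simp only [Finset.mem_Icc, Finset.mem_Ico]; omega) ?_
    intro s hs hs'
    simp only [Finset.mem_Icc, Finset.mem_Ico] at hs hs'
    obtain rfl | hlast : s = 1 ∨ l - s = 1 := by omega
    · rw [hf, zero_mul]
    · rw [hlast, hg, mul_zero]
  rw [hinner, coeff_mul, Finset.Nat.sum_antidiagonal_eq_sum_range_succ_mk,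
    Finset.sum_range_succ, Finset.range_eq_Ico, Finset.sum_eq_sum_Ico_succ_bot (by omega),
    Nat.sub_self, Nat.sub_zero, add_right_comm]

theorem coeff_three_mul_of_coeff_one_eq_zero {f g : R⟦X⟧} (hf : coeff 1 f = 0)
    (hg : coeff 1 g = 0) :
    coeff 3 (f * g) = coeff 0 f * coeff 3 g + coeff 3 f * coeff 0 g := by
  simpa using coeff_mul_of_coeff_one_eq_zero hf hg (l := 3) (by norm_num)

end Coefficients

section EulerDerivation

variable {R : Type*} [CommSemiring R]

variable (R) in
/-- The Euler operator `θ = X d/dX` on power series, which multiplies the coefficient of `Xⁿ` by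
`n`. -/
noncomputable def eulerDerivation : Derivation R R⟦X⟧ R⟦X⟧ :=
  (X : R⟦X⟧) • derivative R

theorem eulerDerivation_apply (f : R⟦X⟧) : eulerDerivation R f = X * derivative R f :=
  rfl

theorem coeff_eulerDerivation (f : R⟦X⟧) (n : ℕ) :
    coeff n (eulerDerivation R f) = n * coeff n f := by
  rw [eulerDerivation_apply]
  cases n with
  | zero => simp
  | succ n => rw [coeff_succ_X_mul, coeff_derivative, Nat.cast_succ, mul_comm]

end EulerDerivation

section Expand

variable {R : Type*} [CommRing R]

theorem powerSeries_expand_injective {p : ℕ} (hp : p ≠ 0) :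
    Function.Injective (expand (R := R) p hp) := fun f g h => by
  ext n
  rw [← coeff_expand_mul p hp f, h, coeff_expand_mul]

theorem single_mul_eq_ofPowerSeries_expand {p : ℕ} (hp : p ≠ 0) {k : ℤ} {F : LaurentSeries R}
    {f : R⟦X⟧} (hcoeff : ∀ n : ℕ, F.coeff (p * n - k) = coeff n f)
    (hzero : ∀ m : ℤ, (∀ n : ℕ, m ≠ p * n - k) → F.coeff m = 0) :
    HahnSeries.single k 1 * F = HahnSeries.ofPowerSeries ℤ R (expand p hp f) := by
  ext m
  rw [HahnSeries.coeff_single_mul, one_mul, PowerSeries.coeff_coe]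
  by_cases hm : ∃ n : ℕ, m = p * n
  · obtain ⟨n, rfl⟩ := hm
    have hnonneg : (0 : ℤ) ≤ p * n := by positivity
    rw [hcoeff, if_neg hnonneg.not_gt, Int.natAbs_mul, Int.natAbs_natCast, Int.natAbs_natCast,
      coeff_expand_mul]
  · rw [hzero (m - k) fun n hn => hm ⟨n, by linarith⟩]
    split_ifs with hneg
    · rfl
    · rw [coeff_expand_of_not_dvd]
      rintro ⟨n, hn⟩
      exact hm ⟨n, by rw [← Nat.cast_mul, ← hn]; omega⟩

end Expand

section WeierstrassSeries

variable {R : Type*} [CommSemiring R]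

/-- The power series `1 + ∑_{l ≥ 2} d l · wˡ`, which is `z²X_d` written in the variable
`w = z²`. -/
def weierstrassSeries (d : ℕ → R) : R⟦X⟧ :=
  mk fun | 0 => 1 | 1 => 0 | l + 2 => d (l + 2)

theorem coeff_zero_weierstrassSeries (d : ℕ → R) : coeff 0 (weierstrassSeries d) = 1 :=
  coeff_mk _ _

theorem coeff_one_weierstrassSeries (d : ℕ → R) : coeff 1 (weierstrassSeries d) = 0 :=
  coeff_mk _ _

theorem coeff_weierstrassSeries (d : ℕ → R) {l : ℕ} (hl : 2 ≤ l) :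
    coeff l (weierstrassSeries d) = d l := by
  obtain ⟨l, rfl⟩ := Nat.exists_eq_add_of_le' hl
  exact coeff_mk _ _

theorem coeff_weierstrassSeries_sq (d : ℕ → R) {l : ℕ} (hl : 2 ≤ l) :
    coeff l (weierstrassSeries d ^ 2) =
      2 * d l + ∑ s ∈ Finset.Icc 2 (l - 2), d s * d (l - s) := by
  have hone := coeff_one_weierstrassSeries d
  rw [sq, coeff_mul_of_coeff_one_eq_zero hone hone hl, coeff_zero_weierstrassSeries,
    coeff_weierstrassSeries d hl, mul_one, one_mul, ← two_mul]
  congr 1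
  refine Finset.sum_congr rfl fun s hs => ?_
  rw [Finset.mem_Icc] at hs
  rw [coeff_weierstrassSeries d hs.1, coeff_weierstrassSeries d (by omega)]

theorem coeff_three_weierstrassSeries_cube (d : ℕ → R) :
    coeff 3 (weierstrassSeries d ^ 3) = 3 * d 3 := by
  have hone := coeff_one_weierstrassSeries d
  have hone_sq : coeff 1 (weierstrassSeries d ^ 2) = 0 := by
    rw [coeff_one_pow, hone, mul_zero, zero_mul]
  have hzero_sq : coeff 0 (weierstrassSeries d ^ 2) = 1 := by
    rw [coeff_zero_eq_constantCoeff_apply, map_pow, ← coeff_zero_eq_constantCoeff_apply,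
      coeff_zero_weierstrassSeries, one_pow]
  rw [pow_succ', coeff_three_mul_of_coeff_one_eq_zero hone hone_sq, coeff_zero_weierstrassSeries,
    hzero_sq, coeff_weierstrassSeries_sq d (by norm_num), coeff_weierstrassSeries d (by norm_num)]
  simp only [Finset.Icc_eq_empty_of_lt (show 3 - 2 < 2 by norm_num), Finset.sum_empty]
  ring

end WeierstrassSeries

section WeierstrassCubic

variable {R : Type*} [CommRing R]

/-- The power series `θf - f` for `f = weierstrassSeries d`, which is `z³Y_d` written in the
variable `w = z²`. -/
noncomputable def weierstrassDerivSeries (d : ℕ → R) : R⟦X⟧ :=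
  eulerDerivation R (weierstrassSeries d) - weierstrassSeries d

theorem coeff_weierstrassDerivSeries (d : ℕ → R) (n : ℕ) :
    coeff n (weierstrassDerivSeries d) = ((n : R) - 1) * coeff n (weierstrassSeries d) := by
  rw [weierstrassDerivSeries, map_sub, coeff_eulerDerivation, sub_one_mul]

theorem coeff_three_weierstrassDerivSeries_sq (d : ℕ → R) :
    coeff 3 (weierstrassDerivSeries d ^ 2) = -4 * d 3 := by
  have hone : coeff 1 (weierstrassDerivSeries d) = 0 := by
    rw [coeff_weierstrassDerivSeries, coeff_one_weierstrassSeries, mul_zero]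
  rw [sq, coeff_three_mul_of_coeff_one_eq_zero hone hone, coeff_weierstrassDerivSeries,
    coeff_weierstrassDerivSeries, coeff_zero_weierstrassSeries,
    coeff_weierstrassSeries d (by norm_num)]
  push_cast
  ring

theorem isUnit_weierstrassDerivSeries (d : ℕ → R) : IsUnit (weierstrassDerivSeries d) := by
  rw [isUnit_iff_constantCoeff, ← coeff_zero_eq_constantCoeff_apply, coeff_weierstrassDerivSeries,
    coeff_zero_weierstrassSeries]
  simp

/-- The cubic `g² = f³ + a w² f + b w³`, where `f` is `weierstrassSeries d` and `g` is
`weierstrassDerivSeries d`: the curve equation for `X_d` and `Y_d`, multiplied by `z⁶` and written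
in the variable `w = z²`. -/
def IsWeierstrassCubic (a b : R) (d : ℕ → R) : Prop :=
  weierstrassDerivSeries d ^ 2 =
    weierstrassSeries d ^ 3 + C a * X ^ 2 * weierstrassSeries d + C b * X ^ 3

namespace IsWeierstrassCubic

variable {a b : R} {d : ℕ → R}

theorem second_order_equation (h : IsWeierstrassCubic a b d) :
    2 * eulerDerivation R (weierstrassDerivSeries d) - 3 * weierstrassDerivSeries d =
      3 * weierstrassSeries d ^ 2 + C a * X ^ 2 :=
  two_mul_derivation_sub_three_mul_eq_of_sq_eq (eulerDerivation R)
    (by simp [eulerDerivation_apply]) (by simp [eulerDerivation_apply])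
    (by simp [eulerDerivation_apply]) rfl
    (isUnit_weierstrassDerivSeries d).isRegular.left h

theorem recurrence (h : IsWeierstrassCubic a b d) {l : ℕ} (hl : 2 ≤ l) :
    (2 * (l : R) + 1) * ((l : R) - 3) * d l =
      3 * ∑ s ∈ Finset.Icc 2 (l - 2), d s * d (l - s) + if l = 2 then a else 0 := by
  have hcoeff := congrArg (coeff l) h.second_order_equation
  rw [map_sub, map_add, ← map_ofNat C 2, ← map_ofNat C 3, coeff_C_mul, coeff_C_mul, coeff_C_mul,
    coeff_C_mul, coeff_eulerDerivation, coeff_weierstrassDerivSeries,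
    coeff_weierstrassSeries_sq d hl, coeff_weierstrassSeries d hl, coeff_X_pow, mul_ite, mul_one,
    mul_zero] at hcoeff
  linear_combination hcoeff

theorem neg_five_mul_eq (h : IsWeierstrassCubic a b d) : -5 * d 2 = a := by
  have hrec := h.recurrence le_rfl
  rw [if_pos rfl, Finset.Icc_eq_empty_of_lt (by norm_num), Finset.sum_empty] at hrec
  push_cast at hrec
  linear_combination hrec

theorem neg_seven_mul_eq (h : IsWeierstrassCubic a b d) : -7 * d 3 = b := by
  have hcoeff := congrArg (coeff 3) h
  rw [coeff_three_weierstrassDerivSeries_sq, map_add, map_add,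
    coeff_three_weierstrassSeries_cube, mul_assoc, coeff_C_mul, coeff_C_mul, coeff_X_pow_self,
    coeff_X_pow_mul', if_pos (by norm_num), coeff_one_weierstrassSeries] at hcoeff
  linear_combination hcoeff

theorem weierstrassRec {K : Type*} [Field K] [CharZero K] {a b : K} {d : ℕ → K}
    (h : IsWeierstrassCubic a b d) : WeierstrassRec a b d := by
  refine ⟨?_, ?_, fun l hl => ?_⟩
  · rw [eq_div_iff (by norm_num)]
    linear_combination -h.neg_five_mul_eq
  · rw [eq_div_iff (by norm_num)]
    linear_combination -h.neg_seven_mul_eq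
  · have hl3 : (l : K) - 3 ≠ 0 := sub_ne_zero.mpr (by exact_mod_cast (by omega : l ≠ 3))
    have hl1 : 2 * (l : K) + 1 ≠ 0 := by exact_mod_cast (2 * l).succ_ne_zero
    have hrec := h.recurrence (show 2 ≤ l by omega)
    rw [if_neg (by omega), add_zero] at hrec
    rw [div_mul_eq_mul_div, eq_div_iff (mul_ne_zero hl1 hl3), mul_comm, hrec]

end IsWeierstrassCubic

end WeierstrassCubic

section LaurentSeries

variable {K : Type*} [Field K] {a b : K} {d : ℕ → K} {Xd Yd : LaurentSeries K}

theorem IsWeierstrassX.single_mul_eq (h : IsWeierstrassX d Xd) :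
    HahnSeries.single 2 1 * Xd =
      HahnSeries.ofPowerSeries ℤ K (expand 2 two_ne_zero (weierstrassSeries d)) := by
  obtain ⟨hlead, hcoeff, hzero⟩ := h
  refine single_mul_eq_ofPowerSeries_expand two_ne_zero (fun n => ?_) fun m hm => ?_
  · obtain rfl | rfl | hn : n = 0 ∨ n = 1 ∨ 2 ≤ n := by omega
    · rw [coeff_zero_weierstrassSeries, ← hlead]; rfl
    · rw [coeff_one_weierstrassSeries]
      exact hzero _ (by norm_num) (by omega)
    · rw [coeff_weierstrassSeries d hn]
      exact hcoeff n hn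
  · exact hzero m (by simpa using hm 0) fun l _ => hm l

theorem IsWeierstrassY.single_mul_eq (h : IsWeierstrassY d Yd) :
    HahnSeries.single 3 1 * Yd =
      HahnSeries.ofPowerSeries ℤ K (expand 2 two_ne_zero (weierstrassDerivSeries d)) := by
  obtain ⟨hlead, hcoeff, hzero⟩ := h
  refine single_mul_eq_ofPowerSeries_expand two_ne_zero (fun n => ?_) fun m hm => ?_
  · rw [coeff_weierstrassDerivSeries]
    obtain rfl | rfl | hn : n = 0 ∨ n = 1 ∨ 2 ≤ n := by omega
    · simpa [coeff_zero_weierstrassSeries] using hlead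
    · rw [coeff_one_weierstrassSeries, mul_zero]
      exact hzero _ (by norm_num) (by omega)
    · rw [coeff_weierstrassSeries d hn]
      exact hcoeff n hn
  · exact hzero m (by simpa using hm 0) fun l _ => hm l

theorem isWeierstrassCubic_of_sq_eq (hX : IsWeierstrassX d Xd) (hY : IsWeierstrassY d Yd)
    (hcurve : Yd ^ 2 = Xd ^ 3 + HahnSeries.C a * Xd + HahnSeries.C b) :
    IsWeierstrassCubic a b d := by
  refine powerSeries_expand_injective two_ne_zero (HahnSeries.ofPowerSeries_injective (Γ := ℤ) ?_)
  have hsingle : (HahnSeries.single 3 1 : LaurentSeries K) ^ 2 = HahnSeries.single 2 1 ^ 3 := by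
    simp [HahnSeries.single_pow]
  have hX_sq : HahnSeries.ofPowerSeries ℤ K (X ^ 2) = HahnSeries.single 2 1 :=
    HahnSeries.ofPowerSeries_X_pow 2
  simp only [map_add, map_mul, map_pow (expand _ _), map_pow (HahnSeries.ofPowerSeries _ _),
    expand_C, expand_X, HahnSeries.ofPowerSeries_C, ← hX.single_mul_eq, ← hY.single_mul_eq]
  rw [← map_pow (HahnSeries.ofPowerSeries ℤ K) X 2, hX_sq]
  linear_combination HahnSeries.single 2 1 ^ 3 * hcurve + Yd ^ 2 * hsingle

end LaurentSeries

/-- Uniqueness of the Weierstrass recurrence coefficients: any sequence `d` (for `l ≥ 2`)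
whose associated Laurent series `X_d, Y_d` satisfy `Y_d² = X_d³ + a·X_d + b`
coincides, for all `l ≥ 2`, with the sequence `c` given by the Weierstrass recurrence. -/
theorem weierstrass_coefficients_unique
    {K : Type*} [Field K] [CharZero K] (a b : K) (c : ℕ → K)
    (hc : WeierstrassRec a b c) (d : ℕ → K) (Xd Yd : LaurentSeries K)
    (hXd : IsWeierstrassX d Xd) (hYd : IsWeierstrassY d Yd)
    (heq : Yd ^ 2 = Xd ^ 3 + HahnSeries.C a * Xd + HahnSeries.C b) :
    ∀ l : ℕ, 2 ≤ l → d l = c l := by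
  have hcubic : IsWeierstrassCubic a b d := isWeierstrassCubic_of_sq_eq hXd hYd heq
  have hd : WeierstrassRec a b d := hcubic.weierstrassRec
  exact fun l hl => hd.unique hc hl
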